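/- Let H be a complex Hilbert space and let A ⊆ B(H) be a commutative von Neumann subalgebra (a unital *-subalgebra equal to its double commutant) that is nonzero and diffuse, i.e., A contains no minimal projection. Then there is no faithful conditional expectation E : B(H) → A. -/

import Mathlib

/-!
Suppose `E` is a faithful conditional expectation onto a nonzero diffuse von Neumann algebra `M`.
For a rank-one operator `p = ⟨ξ, ·⟩ ξ` with `ξ ≠ 0`, the element `a = E p` of `M` is positive and
nonzero, so it has a nonzero spectral projection `e ∈ M` with `δ • e ≤ e * a * e` for some `δ > 0`.
Splitting `e` repeatedly and keeping the piece on which `ξ` has the smaller mass gives a nonzero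
projection `f ≤ e` in `M` with `‖f ξ‖ ^ 2 < δ`. Then
`δ • f ≤ f * a * f = E (f * p * f) ≤ ‖f * p * f‖ • f = ‖f ξ‖ ^ 2 • f`, a contradiction.
-/

section Definitions

/-- `q` is a nonzero projection with no proper nonzero subprojection in `S`. Membership of `q` in
`S` is not included. -/
def IsMinimalProjection {R : Type*} [Mul R] [Star R] [Zero R] [LE R] (S : Set R) (q : R) : Prop :=
  IsSelfAdjoint q ∧ IsIdempotentElem q ∧ q ≠ 0 ∧
    ∀ r ∈ S, IsSelfAdjoint r → IsIdempotentElem r → r ≤ q → r = 0 ∨ r = q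

/-- A set of operators is diffuse if it contains no minimal projection. -/
def IsDiffuse {R : Type*} [Mul R] [Star R] [Zero R] [LE R] (S : Set R) : Prop :=
  ¬ ∃ q ∈ S, IsMinimalProjection S q

variable {𝕜 R : Type*} [Semiring 𝕜] [NonUnitalSemiring R] [Module 𝕜 R] [LE R]

/-- Conditional expectations onto `S`: positive `S`-bimodule projections of `R` onto `S`. They are
encoded as endomorphisms of `R` with values in `S`. -/
structure IsConditionalExpectation (S : Set R) (E : R →ₗ[𝕜] R) : Prop where
  map_mem : ∀ x, E x ∈ S
  map_of_mem : ∀ a ∈ S, E a = a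
  map_nonneg : ∀ x, 0 ≤ x → 0 ≤ E x
  map_mul_mul : ∀ a ∈ S, ∀ b ∈ S, ∀ x, E (a * x * b) = a * E x * b

/-- Conditional expectations that vanish on no nonzero positive element. -/
structure IsFaithfulConditionalExpectation (S : Set R) (E : R →ₗ[𝕜] R) : Prop
    extends IsConditionalExpectation S E where
  eq_zero_of_map_eq_zero : ∀ x, 0 ≤ x → E x = 0 → x = 0

end Definitions

section CStarAlgebra

variable {B : Type*} [CStarAlgebra B] [PartialOrder B] [StarOrderedRing B]

lemma conjugate_le_norm_smul_of_isStarProjection {f x : B} (hf : IsStarProjection f)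
    (hx : IsSelfAdjoint x) : f * x * f ≤ ‖f * x * f‖ • f := by
  have hfxf : IsSelfAdjoint (f * x * f) := hx.conjugate_self hf.isSelfAdjoint
  have hff : f * f = f := hf.isIdempotentElem
  calc f * x * f = f * (f * x * f) * f := by
        rw [← mul_assoc, ← mul_assoc, hff, mul_assoc _ f f, hff]
    _ ≤ f * algebraMap ℝ B ‖f * x * f‖ * f :=
      hf.isSelfAdjoint.conjugate_le_conjugate hfxf.le_algebraMap_norm_self
    _ = ‖f * x * f‖ • f := by simp [Algebra.algebraMap_eq_smul_one, hff]

lemma IsConditionalExpectation.conjugate_map_le {S : Set B} {E : B →ₗ[ℂ] B}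
    (hE : IsConditionalExpectation S E) {f x : B} (hfS : f ∈ S) (hf : IsStarProjection f)
    (hx : IsSelfAdjoint x) : f * E x * f ≤ ‖f * x * f‖ • f := by
  have hpos : 0 ≤ E (‖f * x * f‖ • f - f * x * f) :=
    hE.map_nonneg _ (sub_nonneg.mpr (conjugate_le_norm_smul_of_isStarProjection hf hx))
  rwa [map_sub, LinearMap.map_smul_of_tower, hE.map_of_mem f hfS, hE.map_mul_mul f hfS f hfS,
    sub_nonneg] at hpos

lemma smul_le_conjugate_of_le {a e f : B} (he : IsStarProjection e) (hf : IsStarProjection f)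
    (hfe : f ≤ e) {δ : ℝ} (hea : δ • e ≤ e * a * e) : δ • f ≤ f * a * f := by
  have hfe_mul : f * e = f := (hf.le_iff_mul_eq_left he).mp hfe
  have hef_mul : e * f = f := (hf.le_iff_mul_eq_right he).mp hfe
  calc δ • f = f * (δ • e) * f := by simp [hfe_mul, hf.isIdempotentElem.eq]
    _ ≤ f * (e * a * e) * f := hf.isSelfAdjoint.conjugate_le_conjugate hea
    _ = f * a * f := by
      rw [← mul_assoc, ← mul_assoc, hfe_mul, mul_assoc _ e f, hef_mul]

lemma posPart_sub_algebraMap_ne_zero {a : B} (ha : 0 ≤ a) {δ : ℝ} (hδ : 0 ≤ δ)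
    (hδa : δ < ‖a‖) : (a - algebraMap ℝ B δ)⁺ ≠ 0 := by
  intro hpos
  have hsa : IsSelfAdjoint (a - algebraMap ℝ B δ) :=
    (IsSelfAdjoint.of_nonneg ha).sub (.algebraMap _ (.all δ))
  have hle : a - algebraMap ℝ B δ ≤ 0 := by
    rw [← CFC.posPart_sub_negPart _ hsa, hpos, zero_sub]
    exact neg_nonpos.mpr (CFC.negPart_nonneg _)
  exact hδa.not_ge
    ((CStarAlgebra.norm_le_iff_le_algebraMap a hδ ha).mpr (sub_nonpos.mp hle))

end CStarAlgebra

section HilbertSpace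

variable {𝕜 H : Type*} [RCLike 𝕜] [NormedAddCommGroup H] [InnerProductSpace 𝕜 H] [CompleteSpace H]

/-- The range projection of `b`: the orthogonal projection onto the closure of its range. -/
noncomputable def rangeProjection (b : H →L[𝕜] H) : H →L[𝕜] H :=
  b.range.topologicalClosure.starProjection

lemma isStarProjection_rangeProjection (b : H →L[𝕜] H) : IsStarProjection (rangeProjection b) :=
  isStarProjection_starProjection

lemma rangeProjection_mul_self (b : H →L[𝕜] H) : rangeProjection b * b = b := by
  ext x
  exact Submodule.starProjection_eq_self_iff.mpr
    (b.range.le_topologicalClosure (LinearMap.mem_range_self _ x))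

lemma mul_rangeProjection_eq_zero {b x : H →L[𝕜] H} (hxb : x * b = 0) :
    x * rangeProjection b = 0 := by
  have hker : b.range.topologicalClosure ≤ x.ker := by
    refine Submodule.topologicalClosure_minimal _ ?_ x.isClosed_ker
    rintro _ ⟨y, rfl⟩
    exact DFunLike.congr_fun hxb y
  ext y
  exact hker (Submodule.starProjection_apply_mem _ y)

lemma norm_apply_sq_eq_add_of_mul_eq_left {r f : H →L[𝕜] H} (hr : IsStarProjection r)
    (hrf : r * f = r) (ξ : H) : ‖f ξ‖ ^ 2 = ‖r ξ‖ ^ 2 + ‖(f - r) ξ‖ ^ 2 := by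
  have horth : r * (f - r) = 0 := by rw [mul_sub, hrf, hr.isIdempotentElem.eq, sub_self]
  have hinner : inner 𝕜 (r ξ) ((f - r) ξ) = 0 :=
    calc inner 𝕜 (r ξ) ((f - r) ξ) = inner 𝕜 ξ ((r * (f - r)) ξ) :=
          hr.isSelfAdjoint.isSymmetric ξ ((f - r) ξ)
      _ = 0 := by rw [horth, zero_apply, inner_zero_right]
  simpa [sq] using norm_add_sq_eq_norm_sq_add_norm_sq_of_inner_eq_zero _ _ hinner

lemma norm_conjugate_rankOne_self {f : H →L[𝕜] H} (hf : IsSelfAdjoint f) (ξ : H) :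
    ‖f * InnerProductSpace.rankOne 𝕜 ξ ξ * f‖ = ‖f ξ‖ ^ 2 := by
  have hrank : f * InnerProductSpace.rankOne 𝕜 ξ ξ * f =
      InnerProductSpace.rankOne 𝕜 (f ξ) (f ξ) := by
    ext x
    have hsymm : inner 𝕜 (f ξ) x = inner 𝕜 ξ (f x) := hf.isSymmetric ξ x
    simp [hsymm]
  rw [hrank, InnerProductSpace.norm_rankOne, sq]

end HilbertSpace

section Diffuse

open Filter Topology

variable {H : Type*} [NormedAddCommGroup H] [InnerProductSpace ℂ H] [CompleteSpace H]

lemma IsDiffuse.exists_proper_subprojection {R : Type*} [Mul R] [Star R] [Zero R] [LE R]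
    {S : Set R} (hS : IsDiffuse S) {q : R} (hqS : q ∈ S) (hq : IsStarProjection q) (hq0 : q ≠ 0) :
    ∃ r ∈ S, IsStarProjection r ∧ r ≤ q ∧ r ≠ 0 ∧ r ≠ q := by
  by_contra! hmin
  refine hS ⟨q, hqS, hq.isSelfAdjoint, hq.isIdempotentElem, hq0, fun r hrS hr hr' hrq ↦ ?_⟩
  exact or_iff_not_imp_left.mpr (hmin r hrS ⟨hr', hr⟩ hrq)

variable {σ : Type*} [SetLike σ (H →L[ℂ] H)] [AddSubgroupClass σ (H →L[ℂ] H)] {A : σ}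

lemma IsDiffuse.exists_le_norm_apply_sq_le_half (hA : IsDiffuse (A : Set (H →L[ℂ] H)))
    {f : H →L[ℂ] H} (hfA : f ∈ A) (hf : IsStarProjection f) (hf0 : f ≠ 0) (ξ : H) :
    ∃ g ∈ A, IsStarProjection g ∧ g ≠ 0 ∧ g ≤ f ∧ ‖g ξ‖ ^ 2 ≤ 1 / 2 * ‖f ξ‖ ^ 2 := by
  obtain ⟨r, hrA, hr, hrf, hr0, hr_ne⟩ := hA.exists_proper_subprojection hfA hf hf0
  have hpyth := norm_apply_sq_eq_add_of_mul_eq_left hr ((hr.le_iff_mul_eq_left hf).mp hrf) ξ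
  rcases le_total (‖r ξ‖ ^ 2) (‖(f - r) ξ‖ ^ 2) with hle | hle
  · exact ⟨r, hrA, hr, hr0, hrf, by linarith⟩
  · exact ⟨f - r, sub_mem hfA hrA, (hr.le_iff_sub hf).mp hrf, sub_ne_zero.mpr hr_ne.symm,
      sub_le_self f hr.nonneg, by linarith⟩

lemma IsDiffuse.exists_le_norm_apply_sq_le_pow (hA : IsDiffuse (A : Set (H →L[ℂ] H)))
    {e : H →L[ℂ] H} (heA : e ∈ A) (he : IsStarProjection e) (he0 : e ≠ 0) (ξ : H) (n : ℕ) :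
    ∃ f ∈ A, IsStarProjection f ∧ f ≠ 0 ∧ f ≤ e ∧ ‖f ξ‖ ^ 2 ≤ (1 / 2) ^ n * ‖e ξ‖ ^ 2 := by
  induction n with
  | zero => exact ⟨e, heA, he, he0, le_rfl, by simp⟩
  | succ n ih =>
    obtain ⟨f, hfA, hf, hf0, hfe, hfξ⟩ := ih
    obtain ⟨g, hgA, hg, hg0, hgf, hgξ⟩ := hA.exists_le_norm_apply_sq_le_half hfA hf hf0 ξ
    refine ⟨g, hgA, hg, hg0, hgf.trans hfe, ?_⟩
    calc ‖g ξ‖ ^ 2 ≤ 1 / 2 * ‖f ξ‖ ^ 2 := hgξ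
      _ ≤ 1 / 2 * ((1 / 2) ^ n * ‖e ξ‖ ^ 2) := by gcongr
      _ = (1 / 2) ^ (n + 1) * ‖e ξ‖ ^ 2 := by ring

lemma IsDiffuse.exists_le_norm_apply_sq_lt (hA : IsDiffuse (A : Set (H →L[ℂ] H)))
    {e : H →L[ℂ] H} (heA : e ∈ A) (he : IsStarProjection e) (he0 : e ≠ 0) (ξ : H)
    {ε : ℝ} (hε : 0 < ε) :
    ∃ f ∈ A, IsStarProjection f ∧ f ≠ 0 ∧ f ≤ e ∧ ‖f ξ‖ ^ 2 < ε := by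
  have hlim : Tendsto (fun n : ℕ ↦ (1 / 2 : ℝ) ^ n * ‖e ξ‖ ^ 2) atTop (𝓝 0) := by
    have hpow : Tendsto (fun n : ℕ ↦ (1 / 2 : ℝ) ^ n) atTop (𝓝 0) :=
      tendsto_pow_atTop_nhds_zero_of_lt_one (by norm_num) (by norm_num)
    simpa using hpow.mul_const (‖e ξ‖ ^ 2)
  obtain ⟨n, hn⟩ := (hlim.eventually_lt_const hε).exists
  obtain ⟨f, hfA, hf, hf0, hfe, hfξ⟩ := hA.exists_le_norm_apply_sq_le_pow heA he he0 ξ n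
  exact ⟨f, hfA, hf, hf0, hfe, hfξ.trans_lt hn⟩

end Diffuse

section VonNeumann

variable {H : Type*} [NormedAddCommGroup H] [InnerProductSpace ℂ H] [CompleteSpace H]
  {M : VonNeumannAlgebra H}

lemma posPart_mem_vonNeumannAlgebra {c : H →L[ℂ] H} (hc : c ∈ M) : c⁺ ∈ M := by
  rw [← M.commutant_commutant, VonNeumannAlgebra.mem_commutant_iff]
  intro T hT
  have hcT : Commute c T := VonNeumannAlgebra.mem_commutant_iff.mp hT c hc
  rw [CFC.posPart_def]
  exact (hcT.cfcₙ_real _).symm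

lemma rangeProjection_mem_vonNeumannAlgebra {b : H →L[ℂ] H} (hb : b ∈ M) :
    rangeProjection b ∈ M := by
  rw [VonNeumannAlgebra.IsStarProjection.mem_iff (isStarProjection_rangeProjection b)]
  intro T hT
  have hbT : b * T = T * b := VonNeumannAlgebra.mem_commutant_iff.mp hT b hb
  rw [rangeProjection, Submodule.range_starProjection]
  refine Submodule.topologicalClosure_mem_invtSubmodule (f := T) ?_
  rintro _ ⟨x, rfl⟩
  exact ⟨T x, DFunLike.congr_fun hbT x⟩

lemma exists_isStarProjection_smul_le_conjugate {a : H →L[ℂ] H} (haM : a ∈ M) (ha : 0 ≤ a)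
    {δ : ℝ} (hδ : 0 ≤ δ) (hδa : δ < ‖a‖) :
    ∃ e ∈ M, IsStarProjection e ∧ e ≠ 0 ∧ δ • e ≤ e * a * e := by
  set c := a - algebraMap ℝ (H →L[ℂ] H) δ with hc
  have hc_sa : IsSelfAdjoint c := (IsSelfAdjoint.of_nonneg ha).sub (.algebraMap _ (.all δ))
  have hcM : c ∈ M := sub_mem haM (M.algebraMap_mem (δ : ℂ))
  set e := rangeProjection c⁺
  have he : IsStarProjection e := isStarProjection_rangeProjection c⁺
  have hec : e * c⁺ = c⁺ := rangeProjection_mul_self c⁺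
  have hce : c⁻ * e = 0 := mul_rangeProjection_eq_zero (CFC.negPart_mul_posPart c)
  have hcompress : e * c * e = e * c⁺ * e := by
    conv_lhs => rw [← CFC.posPart_sub_negPart c hc_sa]
    rw [mul_sub, sub_mul, mul_assoc e c⁻ e, hce, mul_zero, sub_zero]
  have hexpand : e * c * e = e * a * e - δ • e := by
    simp [hc, mul_sub, sub_mul, Algebra.algebraMap_eq_smul_one, he.isIdempotentElem.eq]
  have hnonneg : 0 ≤ e * c * e :=
    hcompress ▸ he.isSelfAdjoint.conjugate_nonneg (CFC.posPart_nonneg c)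
  have heM : e ∈ M := rangeProjection_mem_vonNeumannAlgebra (posPart_mem_vonNeumannAlgebra hcM)
  refine ⟨e, heM, he, ?_, ?_⟩
  · intro he0
    exact posPart_sub_algebraMap_ne_zero ha hδ hδa (by rw [← hc, ← hec, he0, zero_mul])
  · rwa [hexpand, sub_nonneg] at hnonneg

end VonNeumann

theorem diffuse_no_faithful_expectation_general
    {H : Type*} [NormedAddCommGroup H] [InnerProductSpace ℂ H] [CompleteSpace H]
    (M : VonNeumannAlgebra H) (hM : IsDiffuse (M : Set (H →L[ℂ] H)))
    (hnz : ∃ a ∈ M, a ≠ 0) (E : (H →L[ℂ] H) →ₗ[ℂ] (H →L[ℂ] H)) :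
    ¬ IsFaithfulConditionalExpectation (M : Set (H →L[ℂ] H)) E := by
  intro hE
  obtain ⟨b, -, hb⟩ := hnz
  obtain ⟨ξ, hξ⟩ : ∃ ξ : H, ξ ≠ 0 := (DFunLike.ne_iff.mp hb).imp' b fun _ h ↦ h
  let p := InnerProductSpace.rankOne ℂ ξ ξ
  have hp : 0 ≤ p :=
    (ContinuousLinearMap.nonneg_iff_isPositive p).mpr (InnerProductSpace.isPositive_rankOne_self ξ)
  have hEp0 : E p ≠ 0 := fun h ↦
    InnerProductSpace.rankOne_ne_zero hξ hξ (hE.eq_zero_of_map_eq_zero p hp h)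
  obtain ⟨δ, hδ, hδE⟩ := exists_between (norm_pos_iff.mpr hEp0)
  obtain ⟨e, heM, he, he0, hele⟩ :=
    exists_isStarProjection_smul_le_conjugate (hE.map_mem p) (hE.map_nonneg p hp) hδ.le hδE
  obtain ⟨f, hfM, hf, hf0, hfe, hfξ⟩ := hM.exists_le_norm_apply_sq_lt heM he he0 ξ hδ
  have hsandwich : δ • f ≤ ‖f ξ‖ ^ 2 • f :=
    calc δ • f ≤ f * E p * f := smul_le_conjugate_of_le he hf hfe hele
      _ ≤ ‖f * p * f‖ • f := hE.conjugate_map_le hfM hf (.of_nonneg hp)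
      _ = ‖f ξ‖ ^ 2 • f := by rw [norm_conjugate_rankOne_self hf.isSelfAdjoint]
  exact hfξ.not_ge (le_of_smul_le_smul_right hsandwich (hf.nonneg.lt_of_ne' hf0))

/-- Let `A ⊆ B(H)` be a commutative von Neumann subalgebra (a unital
*-subalgebra equal to its double commutant) that is nonzero and diffuse (contains no
minimal projection). Then there is no faithful conditional expectation
`E : B(H) → A`. -/
theorem diffuse_no_faithful_expectation
    {H : Type*} [NormedAddCommGroup H] [InnerProductSpace ℂ H] [CompleteSpace H]
    (A : StarSubalgebra ℂ (H →L[ℂ] H))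
    (hvN : Set.centralizer (Set.centralizer (A : Set (H →L[ℂ] H))) = (A : Set (H →L[ℂ] H)))
    (hAcomm : ∀ a ∈ A, ∀ b ∈ A, a * b = b * a)
    (hnz : ∃ a ∈ A, a ≠ 0)
    (hdiffuse : ¬ ∃ q ∈ A, IsSelfAdjoint q ∧ IsIdempotentElem q ∧ q ≠ 0 ∧
      (∀ r ∈ A, IsSelfAdjoint r → IsIdempotentElem r → r ≤ q → r = 0 ∨ r = q)) :
    ¬ ∃ E : (H →L[ℂ] H) →ₗ[ℂ] (H →L[ℂ] H),
      (∀ x : H →L[ℂ] H, E x ∈ A) ∧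
      (∀ a ∈ A, E a = a) ∧
      (∀ x : H →L[ℂ] H, 0 ≤ x → 0 ≤ E x) ∧
      (∀ a ∈ A, ∀ b ∈ A, ∀ x : H →L[ℂ] H, E (a * x * b) = a * E x * b) ∧
      (∀ x : H →L[ℂ] H, 0 ≤ x → E x = 0 → x = 0) := by
  rintro ⟨E, hmem, hid, hpos, hmul, hfaithful⟩
  exact diffuse_no_faithful_expectation_general ⟨A, hvN⟩ hdiffuse hnz E
    ⟨⟨hmem, hid, hpos, hmul⟩, hfaithful⟩
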